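/- arXiv:math/0510335 — 6 statements merged into one kernel-verified Lean document; each statement's English description precedes it below -/
import Mathlib

section
/- Let B : ℝ → ℝ be B(u) = (1/√3)·tan(u/(2√3) + π/3). Then B(0) = 1, B'(0) = 2/3, and for every real u with u/(2√3) + π/3 ∈ (−π/2, π/2), the differential equation B'(u) + 3·B(u)·B''(u) = 6·(B'(u))² holds. -/
/-!
With `t = tan (u/(2√3) + π/3)`, the identity `tan' = 1 + tan²` gives the Riccati equation
`B' = (1 + 3 B²)/6` wherever the cosine of the argument does not vanish
(`Bfun_hasDerivAt`). Differentiating it yields `B'' = B B'`, hence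
`B' + 3 B B'' = B' (1 + 3 B²) = 6 (B')²`. The initial values come from `tan (π/3) = √3`.
-/

open Real

/-- The generating function `B(u) = (1/√3)·tan(u/(2√3) + π/3)` of the trigonal
Hurwitz–Hodge integrals `B_g`. -/
noncomputable def Bfun : ℝ → ℝ :=
  fun u => (1 / Real.sqrt 3) * Real.tan (u / (2 * Real.sqrt 3) + Real.pi / 3)

/-- The Riccati equation `B' = (1 + 3 B²)/6`, away from the poles of the tangent. -/
theorem Bfun_hasDerivAt (u : ℝ) (h : cos (u / (2 * √3) + π / 3) ≠ 0) :
    HasDerivAt Bfun ((1 + 3 * Bfun u ^ 2) / 6) u := by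
  have hlin : HasDerivAt (fun u : ℝ => u / (2 * √3) + π / 3) (1 / (2 * √3)) u :=
    ((hasDerivAt_id u).div_const _).add_const _
  have hB := ((Real.hasDerivAt_tan h).comp u hlin).const_mul (1 / √3)
  have h3 : √3 ^ 2 = 3 := Real.sq_sqrt (by norm_num)
  have h0 : √3 ≠ 0 := by positivity
  refine hB.congr_deriv ?_
  have hsq : 1 / cos (u / (2 * √3) + π / 3) ^ 2 = 1 + tan (u / (2 * √3) + π / 3) ^ 2 := by
    rw [one_div, ← Real.inv_one_add_tan_sq h, inv_inv]
  simp only [Bfun]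
  rw [hsq]
  generalize tan (u / (2 * √3) + π / 3) = t
  rw [mul_pow, div_pow, h3]
  field_simp
  rw [h3]
  ring

theorem Bfun_zero : Bfun 0 = 1 := by
  have h0 : √3 ≠ 0 := by positivity
  simp [Bfun, Real.tan_pi_div_three]

/-- `B(0) = 1`, `B'(0) = 2/3`, and `B' + 3 B B'' = 6 (B')²` wherever the argument of
the tangent lies in `(-π/2, π/2)`. -/
theorem stmt_4 :
    Bfun 0 = 1 ∧ deriv Bfun 0 = 2 / 3 ∧
      ∀ u : ℝ, u / (2 * Real.sqrt 3) + Real.pi / 3 ∈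
          Set.Ioo (-(Real.pi / 2)) (Real.pi / 2) →
        deriv Bfun u + 3 * Bfun u * deriv (deriv Bfun) u
          = 6 * (deriv Bfun u) ^ 2 := by
  refine ⟨Bfun_zero, ?_, fun u hu => ?_⟩
  · rw [(Bfun_hasDerivAt 0 (by simp)).deriv, Bfun_zero]
    norm_num
  · have hc : cos (u / (2 * √3) + π / 3) ≠ 0 := (Real.cos_pos_of_mem_Ioo hu).ne'
    have hB := Bfun_hasDerivAt u hc
    -- The cosine stays nonzero near `u`, so the Riccati equation can be differentiated at `u`.
    have hev : deriv Bfun =ᶠ[nhds u] fun v => (1 + 3 * Bfun v ^ 2) / 6 := by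
      have hcont : ContinuousAt (fun v : ℝ => cos (v / (2 * √3) + π / 3)) u := by fun_prop
      filter_upwards [hcont.eventually_ne hc] with v hv
      exact (Bfun_hasDerivAt v hv).deriv
    have hB2 := (((hB.pow 2).const_mul 3).const_add 1).div_const 6
    have hd2 : deriv (deriv Bfun) u = Bfun u * ((1 + 3 * Bfun u ^ 2) / 6) := by
      rw [hev.deriv_eq]
      refine (hB2.congr_deriv ?_).deriv
      push_cast
      ring
    rw [hd2, hB.deriv]
    ring
end

section
/- Let B : ℝ → ℝ be B(u) = (1/√3)·tan(u/(2√3) + π/3). If f : ℝ → ℝ is real-analytic at 0, satisfies f(0) = 1 and f'(0) = 2/3, and satisfies the differential equation f'(u) + 3·f(u)·f''(u) = 6·(f'(u))² for all u in some neighborhood of 0, then f coincides with B on a neighborhood of 0. -/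
/-!
The second-order equation has the first integral `(6 f' - 1) / f²`: away from zeros of `f`, its
derivative is `2 (3 f f'' - f' (6 f' - 1)) / f³ = 0`. The initial conditions give it the value `3`,
so `6 f' = 1 + 3 f²`. Hence `arctan (√3 f)` has constant derivative `1 / (2√3)` and value `π / 3`
at `0`, so it equals `u / (2√3) + π / 3`; taking tangents gives the formula.
-/

open Real Filter

lemma eq_of_hasDerivAt_zero_on_ball {g : ℝ → ℝ} {ε : ℝ} (hε : 0 < ε)
    (hg : ∀ u ∈ Metric.ball (0 : ℝ) ε, HasDerivAt g 0 u) :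
    ∀ u ∈ Metric.ball (0 : ℝ) ε, g u = g 0 := fun _ hu =>
  Metric.isOpen_ball.is_const_of_deriv_eq_zero (convex_ball (0 : ℝ) ε).isPreconnected
    (fun v hv => (hg v hv).differentiableAt.differentiableWithinAt)
    (fun v hv => (hg v hv).deriv) hu (Metric.mem_ball_self hε)

/-- Uniqueness: any function real-analytic at `0` with `f(0)=1`, `f'(0)=2/3` satisfying
the ODE `f' + 3 f f'' = 6 (f')²` near `0` coincides with
`B(u) = (1/√3)·tan(u/(2√3) + π/3)` on a neighborhood of `0`. -/
theorem stmt_5 (f : ℝ → ℝ) (hf : AnalyticAt ℝ f 0)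
    (h0 : f 0 = 1) (h1 : deriv f 0 = 2 / 3)
    (hode : ∀ᶠ u in nhds (0 : ℝ),
      deriv f u + 3 * f u * deriv (deriv f) u = 6 * (deriv f u) ^ 2) :
    f =ᶠ[nhds (0 : ℝ)]
      fun u => (1 / Real.sqrt 3) * Real.tan (u / (2 * Real.sqrt 3) + Real.pi / 3) := by
  have hne : ∀ᶠ u in nhds (0 : ℝ), f u ≠ 0 :=
    hf.continuousAt.eventually_ne (by rw [h0]; exact one_ne_zero)
  obtain ⟨ε, hε, hball⟩ := Metric.eventually_nhds_iff_ball.1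
    (hf.eventually_analyticAt.and (hne.and hode))
  have hd : ∀ u ∈ Metric.ball (0 : ℝ) ε, HasDerivAt f (deriv f u) u :=
    fun u hu => (hball u hu).1.differentiableAt.hasDerivAt
  have hdd : ∀ u ∈ Metric.ball (0 : ℝ) ε, HasDerivAt (deriv f) (deriv (deriv f) u) u :=
    fun u hu => (hball u hu).1.deriv.differentiableAt.hasDerivAt
  have first_integral : ∀ u ∈ Metric.ball (0 : ℝ) ε, 6 * deriv f u = 1 + 3 * f u ^ 2 := by
    intro u hu
    have key := eq_of_hasDerivAt_zero_on_ball (g := fun u => (6 * deriv f u - 1) / f u ^ 2) hε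
      (fun v hv => by
        obtain ⟨-, hv0, hv1⟩ := hball v hv
        refine ((((hdd v hv).const_mul 6).sub_const 1).div ((hd v hv).pow 2)
          (pow_ne_zero 2 hv0)).congr_deriv ?_
        rw [div_eq_zero_iff]
        left
        simp only [Pi.pow_apply]
        push_cast
        linear_combination 2 * f v * hv1) u hu
    have hu0 := (hball u hu).2.1
    simp only [h0, h1] at key
    rw [div_eq_iff (pow_ne_zero 2 hu0)] at key
    linear_combination key
  have h3 : √3 ≠ 0 := by positivity
  have hsq : √3 ^ 2 = 3 := Real.sq_sqrt (by norm_num)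
  have harctan : ∀ u ∈ Metric.ball (0 : ℝ) ε,
      arctan (√3 * f u) = u / (2 * √3) + π / 3 := by
    intro u hu
    have key := eq_of_hasDerivAt_zero_on_ball
      (g := fun u => arctan (√3 * f u) - u / (2 * √3)) hε
      (fun v hv => by
        refine (((hd v hv).const_mul √3).arctan.sub
          ((hasDerivAt_id v).div_const (2 * √3))).congr_deriv ?_
        have hpos : 1 + 3 * f v ^ 2 ≠ 0 := by positivity
        rw [mul_pow, hsq]
        field_simp
        rw [hsq]
        linear_combination first_integral v hv) u hu
    have h0' : arctan √3 = π / 3 := by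
      rw [← tan_pi_div_three]
      exact arctan_tan (by linarith [pi_pos]) (by linarith [pi_pos])
    simp only [h0, mul_one, h0', zero_div, sub_zero] at key
    linear_combination key
  filter_upwards [Metric.ball_mem_nhds (0 : ℝ) hε] with u hu
  rw [← harctan u hu, tan_arctan]
  field_simp
end

section
/- Let A : ℝ → ℝ be A(u) = (1/√3)·tan(u/(2√3) + π/6) and B : ℝ → ℝ be B(u) = (1/√3)·tan(u/(2√3) + π/3). Then for every real u in the open interval (−2π/√3, π/√3), one has B(u) ≠ 0 and (2/3)·B(u) − (1/3)·B(u)^{−1} = (4/3)·A(2u) − (1/3)·A(−u). -/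
open Real

/-!
Put `x = u/(2√3) + π/3`, which lies in `(0, π/2)`, and `t = tan x > 0`. The arguments of the tangent
in `A(2u)` and `A(-u)` are `-(π/2 - 2x)` and `π/2 - x`, so the tangents are `-cot 2x` and `cot x`.
By the double-angle formula both sides of the identity equal `(2t - 3/t)/(3√3)`.
-/


/-- With `A(u) = (1/√3)·tan(u/(2√3) + π/6)` and `B(u) = (1/√3)·tan(u/(2√3) + π/3)`,
for every `u ∈ (-2π/√3, π/√3)` one has `B(u) ≠ 0` and
`(2/3)B(u) - (1/3)B(u)⁻¹ = (4/3)A(2u) - (1/3)A(-u)`. -/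
theorem stmt_6
    (A B : ℝ → ℝ)
    (hA : A = fun u => (1 / Real.sqrt 3) * Real.tan (u / (2 * Real.sqrt 3) + Real.pi / 6))
    (hB : B = fun u => (1 / Real.sqrt 3) * Real.tan (u / (2 * Real.sqrt 3) + Real.pi / 3)) :
    ∀ u ∈ Set.Ioo (-(2 * Real.pi / Real.sqrt 3)) (Real.pi / Real.sqrt 3),
      B u ≠ 0 ∧
        (2 / 3) * B u - (1 / 3) * (B u)⁻¹ = (4 / 3) * A (2 * u) - (1 / 3) * A (-u) := by
  rintro u ⟨hl, hr⟩
  have hs : 0 < √3 := by positivity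
  have hs2 : √3 ^ 2 = 3 := Real.sq_sqrt (by norm_num)
  obtain ⟨x, hx⟩ : ∃ x, x = u / (2 * √3) + π / 3 := ⟨_, rfl⟩
  have hu : u = 2 * √3 * (x - π / 3) := by rw [hx]; field_simp; ring
  have he : 2 * √3 * (x - π / 3) * √3 = 6 * x - 2 * π := by
    linear_combination 2 * (x - π / 3) * hs2
  have hx0 : 0 < x := by
    rw [← neg_div, div_lt_iff₀ hs, hu, he] at hl
    linarith
  have hx1 : x < π / 2 := by
    rw [lt_div_iff₀ hs, hu, he] at hr
    linarith
  have ht : 0 < tan x := Real.tan_pos_of_pos_of_lt_pi_div_two hx0 hx1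
  have h1 : 2 * u / (2 * √3) + π / 6 = -(π / 2 - 2 * x) := by
    rw [hu]; field_simp; ring
  have h2 : -u / (2 * √3) + π / 6 = π / 2 - x := by
    rw [hu]; field_simp; ring
  subst hA hB
  simp only [← hx, h1, h2]
  refine ⟨by positivity, ?_⟩
  -- No case split at `x = π/4`: there `tan (2 * x)` and its inverse are both `0`, and so is `1 - t ^ 2`.
  rw [Real.tan_neg, Real.tan_pi_div_two_sub, Real.tan_pi_div_two_sub, Real.tan_two_mul, inv_div]
  field_simp
  rw [hs2]
  ring
end

section
/- Let ω = exp(2πi/3), ω̄ = exp(−2πi/3), and define Â : ℂ → ℂ (where defined) by Â(u) = (i/√3)·(1 + ω̄·exp(iu/√3))/(1 − ω̄·exp(iu/√3)). For all complex numbers v, w such that ω̄·exp(i(v+w)/√3) ≠ 1, ω̄·exp(i(ωv+ω̄w)/√3) ≠ 1, and ω̄·exp(i(ω̄v+ωw)/√3) ≠ 1, one has Â(v+w)·Â(ωv+ω̄w) + Â(ωv+ω̄w)·Â(ω̄v+ωw) + Â(ω̄v+ωw)·Â(v+w) = 1/3. -/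
/-!
Put `x, y, z = ω̄·exp(iu/√3)` for the three arguments `u`. These arguments add up to `0`, because
`1 + ω + ω̄ = 0`, so `xyz = ω̄³ = 1`. Since `(i/√3)² = -1/3`, the claim is the rational identity
`∑ (1+x)(1+y)/((1-x)(1-y)) = -1`, which holds because, after clearing denominators, the two sides
differ by a multiple of `xyz - 1` (`cayley_sum`).
-/

open Complex

/-- The analytic continuation to `ℂ` of the generating function
`A(u) = (1/√3)·tan(u/(2√3) + π/6)`:
`Â(u) = (i/√3)·(1 + ω̄·exp(iu/√3))/(1 - ω̄·exp(iu/√3))`, with `ω̄ = exp(-2πi/3)`. -/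
noncomputable def Ahat (u : ℂ) : ℂ :=
  (Complex.I / (Real.sqrt 3 : ℂ)) *
      (1 + Complex.exp (-(2 * Real.pi * Complex.I / 3)) *
          Complex.exp (Complex.I * u / (Real.sqrt 3 : ℂ))) /
      (1 - Complex.exp (-(2 * Real.pi * Complex.I / 3)) *
          Complex.exp (Complex.I * u / (Real.sqrt 3 : ℂ)))

/-- If `xyz = 1`, the Cayley transforms `c(1+x)/(1-x)`, `c(1+y)/(1-y)`, `c(1+z)/(1-z)` have second
elementary symmetric function `-c²`; here `c² = -1/3`. -/
lemma cayley_sum {c x y z : ℂ} (hc : c ^ 2 = -1 / 3) (hx : x ≠ 1) (hy : y ≠ 1) (hz : z ≠ 1)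
    (h : x * y * z = 1) :
    c * (1 + x) / (1 - x) * (c * (1 + y) / (1 - y))
      + c * (1 + y) / (1 - y) * (c * (1 + z) / (1 - z))
      + c * (1 + z) / (1 - z) * (c * (1 + x) / (1 - x)) = 1 / 3 := by
  have hx' : 1 - x ≠ 0 := sub_ne_zero.mpr hx.symm
  have hy' : 1 - y ≠ 0 := sub_ne_zero.mpr hy.symm
  have hz' : 1 - z ≠ 0 := sub_ne_zero.mpr hz.symm
  have key : (1 + x) * (1 + y) * (1 - z) + (1 + y) * (1 + z) * (1 - x)
      + (1 + z) * (1 + x) * (1 - y) = -((1 - x) * (1 - y) * (1 - z)) := by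
    linear_combination -4 * h
  calc _ = c ^ 2 * ((1 + x) * (1 + y) * (1 - z) + (1 + y) * (1 + z) * (1 - x)
      + (1 + z) * (1 + x) * (1 - y)) / ((1 - x) * (1 - y) * (1 - z)) := by
        field_simp
    _ = 1 / 3 := by
        rw [key, hc]
        field_simp

/-- With `ω = exp(2πi/3)`, `ω̄ = exp(-2πi/3)`: for all complex `v, w` avoiding the poles,
`Â(v+w)Â(ωv+ω̄w) + Â(ωv+ω̄w)Â(ω̄v+ωw) + Â(ω̄v+ωw)Â(v+w) = 1/3`. -/
theorem stmt_10 (v w : ℂ)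
    (ω : ℂ) (hω : ω = Complex.exp (2 * Real.pi * Complex.I / 3))
    (ωb : ℂ) (hωb : ωb = Complex.exp (-(2 * Real.pi * Complex.I / 3)))
    (h1 : ωb * Complex.exp (Complex.I * (v + w) / (Real.sqrt 3 : ℂ)) ≠ 1)
    (h2 : ωb * Complex.exp (Complex.I * (ω * v + ωb * w) / (Real.sqrt 3 : ℂ)) ≠ 1)
    (h3 : ωb * Complex.exp (Complex.I * (ωb * v + ω * w) / (Real.sqrt 3 : ℂ)) ≠ 1) :
    Ahat (v + w) * Ahat (ω * v + ωb * w)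
      + Ahat (ω * v + ωb * w) * Ahat (ωb * v + ω * w)
      + Ahat (ωb * v + ω * w) * Ahat (v + w) = 1 / 3 := by
  have hω3 : ω ^ 3 = 1 := by
    rw [hω, ← Complex.exp_nat_mul, ← Complex.exp_two_pi_mul_I]
    congr 1
    push_cast
    ring
  have hωωb : ω * ωb = 1 := by
    rw [hω, hωb, ← Complex.exp_add, add_neg_cancel, Complex.exp_zero]
  have hωb3 : ωb ^ 3 = 1 := by
    linear_combination (-ωb ^ 3) * hω3 + ((ω * ωb) ^ 2 + ω * ωb + 1) * hωωb
  have hω1 : ω ≠ 1 := by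
    rw [hω]
    exact (Complex.isPrimitiveRoot_exp 3 (by norm_num)).ne_one (by norm_num)
  have hsum : 1 + ω + ωb = 0 := by
    have h0 : 1 + ω + ω ^ 2 = 0 :=
      mul_left_cancel₀ (sub_ne_zero.mpr hω1) (by linear_combination hω3)
    linear_combination h0 - ωb * hω3 + ω ^ 2 * hωωb
  have hc : (Complex.I / (Real.sqrt 3 : ℂ)) ^ 2 = -1 / 3 := by
    have h3' : (Real.sqrt 3 : ℂ) ^ 2 = 3 := by
      norm_cast
      exact Real.sq_sqrt (by norm_num)
    rw [div_pow, Complex.I_sq, h3']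
  have hprod : ωb * Complex.exp (Complex.I * (v + w) / (Real.sqrt 3 : ℂ))
      * (ωb * Complex.exp (Complex.I * (ω * v + ωb * w) / (Real.sqrt 3 : ℂ)))
      * (ωb * Complex.exp (Complex.I * (ωb * v + ω * w) / (Real.sqrt 3 : ℂ))) = 1 := by
    have hexp : Complex.exp (Complex.I * (v + w) / (Real.sqrt 3 : ℂ))
        * Complex.exp (Complex.I * (ω * v + ωb * w) / (Real.sqrt 3 : ℂ))
        * Complex.exp (Complex.I * (ωb * v + ω * w) / (Real.sqrt 3 : ℂ)) = 1 := by
      rw [← Complex.exp_add, ← Complex.exp_add, ← Complex.exp_zero]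
      congr 1
      linear_combination (Complex.I * (v + w) / (Real.sqrt 3 : ℂ)) * hsum
    linear_combination ωb ^ 3 * hexp + hωb3
  unfold Ahat
  rw [← hωb]
  exact cayley_sum hc h1 h2 h3 hprod
end

section
/- Let n ≥ 0 and let c : {0, …, n} → ℝ satisfy ∑_{i=0}^n (−1)^i·c_i ≠ 0. If x, x' : {0, …, n} → ℝ satisfy x_i + x_{i+1} = x'_i + x'_{i+1} for all 0 ≤ i ≤ n−1 and ∑_{i=0}^n c_i·x_i = ∑_{i=0}^n c_i·x'_i, then x_i = x'_i for all i. -/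
open Finset

/-- If `∑ (-1)^i c_i ≠ 0`, then the equations `x_i + x_{i+1} = x'_i + x'_{i+1}`
(`0 ≤ i ≤ n-1`) together with `∑ c_i x_i = ∑ c_i x'_i` force `x = x'`. -/
theorem stmt_14 (n : ℕ) (c x x' : Fin (n + 1) → ℝ)
    (hc : ∑ i : Fin (n + 1), (-1 : ℝ) ^ (i : ℕ) * c i ≠ 0)
    (hadj : ∀ i : Fin n, x i.castSucc + x i.succ = x' i.castSucc + x' i.succ)
    (hsum : ∑ i : Fin (n + 1), c i * x i = ∑ i : Fin (n + 1), c i * x' i) :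
    ∀ i : Fin (n + 1), x i = x' i := by
  -- The adjacent equations make the difference alternate in sign: `d_i = (-1)^i d_0`.
  have halt : ∀ i : Fin (n + 1), x i - x' i = (-1 : ℝ) ^ (i : ℕ) * (x 0 - x' 0) := by
    intro i
    induction i using Fin.induction with
    | zero => simp
    | succ i ih =>
      rw [Fin.val_castSucc] at ih
      rw [Fin.val_succ, pow_succ]
      linarith [hadj i]
  -- Hence `∑ c_i d_i = 0` reads `(∑ (-1)^i c_i) d_0 = 0`.
  have hprod : (∑ i : Fin (n + 1), (-1 : ℝ) ^ (i : ℕ) * c i) * (x 0 - x' 0) = 0 := by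
    rw [Finset.sum_mul, ← sub_eq_zero.mpr hsum, ← Finset.sum_sub_distrib]
    refine Finset.sum_congr rfl fun i _ => ?_
    rw [← mul_sub, halt i]
    ring
  intro i
  rw [← sub_eq_zero, halt i, (mul_eq_zero.mp hprod).resolve_left hc, mul_zero]
end

section
/- Let ω = exp(2πi/3), ω̄ = exp(−2πi/3), and Â(u) = (i/√3)·(1 + ω̄·exp(iu/√3))/(1 − ω̄·exp(iu/√3)) for complex u with ω̄·exp(iu/√3) ≠ 1. For real x₁, x₂ set ξ = x₁+x₂, ξ_ω = ω·x₁+ω̄·x₂, ξ_ω̄ = ω̄·x₁+ω·x₂ (so ξ is real and ξ_ω, ξ_ω̄ are complex). Then whenever ω·exp(iξ_ω/√3) ≠ 1, ω·exp(iξ_ω̄/√3) ≠ 1, and ω̄·exp(−iξ/√3) ≠ 1 (and the arguments of Â below avoid its poles): (i/√3)³·[1 + 2ω·exp(iξ_ω/√3)/(1−ω·exp(iξ_ω/√3)) + 2ω·exp(iξ_ω̄/√3)/(1−ω·exp(iξ_ω̄/√3)) − 2ω̄·exp(−iξ/√3)/(1−ω̄·exp(−iξ/√3))] = (1/3)·[Â(−ξ_ω)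 + Â(−ξ_ω̄) + Â(−ξ)]. -/
/-!
Put `c = i/√3`, so that `c³ = -c/3`. For `z = ω·exp(iu/√3)` the argument of the fraction
in `Â(-u)` is `z⁻¹`, and `(1 + z⁻¹)/(1 - z⁻¹) = -(1 + 2z/(1 - z))`; hence
`Â(-u) = -c·(1 + 2z/(1 - z))` (`Ahat_neg_eq`). Applied to `u = ξ_ω` and `u = ξ_ω̄`, and combined
with the direct expansion `(1 + v)/(1 - v) = 1 + 2v/(1 - v)` for `v = ω̄·exp(-iξ/√3)`, this turns
both sides into the same expression.
-/

open Complex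

/-- The inversion `z ↦ z⁻¹` behind `Â(-u)`, where `z = ω·exp(iu/√3)`. -/
lemma Ahat_neg_eq (u : ℂ)
    (h : Complex.exp (2 * Real.pi * Complex.I / 3) *
      Complex.exp (Complex.I * u / (Real.sqrt 3 : ℂ)) ≠ 1) :
    Ahat (-u) = -(Complex.I / (Real.sqrt 3 : ℂ)) *
      (1 + 2 * Complex.exp (2 * Real.pi * Complex.I / 3) *
          Complex.exp (Complex.I * u / (Real.sqrt 3 : ℂ)) /
        (1 - Complex.exp (2 * Real.pi * Complex.I / 3) *
          Complex.exp (Complex.I * u / (Real.sqrt 3 : ℂ)))) := by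
  have hinv : Complex.exp (-(2 * Real.pi * Complex.I / 3)) *
      Complex.exp (Complex.I * (-u) / (Real.sqrt 3 : ℂ)) =
      (Complex.exp (2 * Real.pi * Complex.I / 3) *
        Complex.exp (Complex.I * u / (Real.sqrt 3 : ℂ)))⁻¹ := by
    rw [mul_inv, ← Complex.exp_neg, ← Complex.exp_neg, mul_neg, neg_div]
  rw [Ahat, hinv, mul_assoc 2 (Complex.exp _)]
  have hz0 : Complex.exp (2 * Real.pi * Complex.I / 3) *
      Complex.exp (Complex.I * u / (Real.sqrt 3 : ℂ)) ≠ 0 :=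
    mul_ne_zero (Complex.exp_ne_zero _) (Complex.exp_ne_zero _)
  generalize Complex.exp (2 * Real.pi * Complex.I / 3) *
    Complex.exp (Complex.I * u / (Real.sqrt 3 : ℂ)) = z at *
  have hd : 1 - z ≠ 0 := sub_ne_zero.mpr h.symm
  have hfrac : (1 + z⁻¹) / (1 - z⁻¹) = -(1 + 2 * z / (1 - z)) := by
    have hd2 : 1 - z⁻¹ ≠ 0 := by
      rw [sub_ne_zero]
      exact fun e => h (inv_eq_one.mp e.symm)
    rw [div_eq_iff hd2]
    field_simp
    ring
  rw [mul_div_assoc, hfrac]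
  ring

/-- The third derivative identity `F̃^Y_{111} = F̃^X_{111}` after the crepant-resolution
change of variables: with `ξ = x₁+x₂`, `ξ_ω = ωx₁+ω̄x₂`, `ξ_ω̄ = ω̄x₁+ωx₂`,
`(i/√3)³·[1 + 2ωe^{iξ_ω/√3}/(1-ωe^{iξ_ω/√3}) + 2ωe^{iξ_ω̄/√3}/(1-ωe^{iξ_ω̄/√3})
  - 2ω̄e^{-iξ/√3}/(1-ω̄e^{-iξ/√3})] = (1/3)·[Â(-ξ_ω) + Â(-ξ_ω̄) + Â(-ξ)]`. -/
theorem stmt_16 (x₁ x₂ : ℝ)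
    (ω : ℂ) (hω : ω = Complex.exp (2 * Real.pi * Complex.I / 3))
    (ωb : ℂ) (hωb : ωb = Complex.exp (-(2 * Real.pi * Complex.I / 3)))
    (ξ : ℝ) (hξ : ξ = x₁ + x₂)
    (ξω : ℂ) (hξω : ξω = ω * x₁ + ωb * x₂)
    (ξωb : ℂ) (hξωb : ξωb = ωb * x₁ + ω * x₂)
    (h1 : ω * Complex.exp (Complex.I * ξω / (Real.sqrt 3 : ℂ)) ≠ 1)
    (h2 : ω * Complex.exp (Complex.I * ξωb / (Real.sqrt 3 : ℂ)) ≠ 1)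
    (h3 : ωb * Complex.exp (-(Complex.I * ξ) / (Real.sqrt 3 : ℂ)) ≠ 1)
    (h4 : ωb * Complex.exp (Complex.I * (-ξω) / (Real.sqrt 3 : ℂ)) ≠ 1)
    (h5 : ωb * Complex.exp (Complex.I * (-ξωb) / (Real.sqrt 3 : ℂ)) ≠ 1)
    (h6 : ωb * Complex.exp (Complex.I * (-(ξ : ℂ)) / (Real.sqrt 3 : ℂ)) ≠ 1) :
    (Complex.I / (Real.sqrt 3 : ℂ)) ^ 3 *
        (1 + 2 * ω * Complex.exp (Complex.I * ξω / (Real.sqrt 3 : ℂ)) /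
              (1 - ω * Complex.exp (Complex.I * ξω / (Real.sqrt 3 : ℂ)))
           + 2 * ω * Complex.exp (Complex.I * ξωb / (Real.sqrt 3 : ℂ)) /
              (1 - ω * Complex.exp (Complex.I * ξωb / (Real.sqrt 3 : ℂ)))
           - 2 * ωb * Complex.exp (-(Complex.I * ξ) / (Real.sqrt 3 : ℂ)) /
              (1 - ωb * Complex.exp (-(Complex.I * ξ) / (Real.sqrt 3 : ℂ))))
      = (1 / 3) * (Ahat (-ξω) + Ahat (-ξωb) + Ahat (-(ξ : ℂ))) := by
  have hc : (Complex.I / (Real.sqrt 3 : ℂ)) ^ 3 = -(Complex.I / (Real.sqrt 3 : ℂ)) / 3 := by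
    have hs : (Real.sqrt 3 : ℂ) ^ 2 = 3 := by
      rw [← Complex.ofReal_pow, Real.sq_sqrt (by norm_num)]
      norm_num
    rw [pow_succ, div_pow, hs, Complex.I_sq]
    ring
  have hA : Ahat (-(ξ : ℂ)) = (Complex.I / (Real.sqrt 3 : ℂ)) *
      (1 + 2 * ωb * Complex.exp (-(Complex.I * ξ) / (Real.sqrt 3 : ℂ)) /
        (1 - ωb * Complex.exp (-(Complex.I * ξ) / (Real.sqrt 3 : ℂ)))) := by
    rw [Ahat, ← hωb, mul_neg, mul_assoc 2]
    have hd := sub_ne_zero.mpr h3.symm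
    rw [mul_div_assoc]
    congr 1
    rw [div_eq_iff hd, add_mul, div_mul_cancel₀ _ hd]
    ring
  rw [hc, hA, Ahat_neg_eq ξω (hω ▸ h1), Ahat_neg_eq ξωb (hω ▸ h2), ← hω]
  ring
end
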